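/- arXiv:1507.04999 — 5 statements merged into one kernel-verified Lean document; each statement's English description precedes it below -/
import Mathlib

section
/- For λ ∈ K, the λ-eigenspace of E acting on Δ is nonzero if and only if λ = −(Σ_{j=0}^n d_j + s) for some s ∈ 𝒜. In other words, the set of E-eigenvalues on Δ is exactly −Σ_j d_j − 𝒜. -/
/-!
Context: `K` is a field of characteristic zero, `n ≥ 0`, and `d 0, …, d n` are
positive integers.  `A = K[x_0, …, x_n]` is the polynomial ring, graded with
`x i` of weighted degree `d i`.  Inside `End_K(A)` we have the multiplication
operators `x i`, the partial derivatives `∂ i`, the Weyl algebra `D` generated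
by them, and the Euler field `E = Σ_i d_i x_i ∂_i`.
-/

open MvPolynomial Finset

set_option linter.unusedSectionVars false
set_option synthInstance.maxHeartbeats 1000000
set_option maxHeartbeats 2000000

noncomputable section

variable (K : Type) [Field K] [CharZero K] (n : ℕ)

/-- The polynomial ring `A = K[x_0, …, x_n]`. -/
abbrev Amb := MvPolynomial (Fin (n+1)) K

/-- The operator of multiplication by `x_i` on `A`. -/
def xOp (i : Fin (n+1)) : Module.End K (Amb K n) := LinearMap.mulLeft K (X i)

/-- The partial derivative `∂/∂x_i` on `A`. -/
def dOp (i : Fin (n+1)) : Module.End K (Amb K n) := (pderiv i).toLinearMap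

/-- The Weyl algebra `D`: the `K`-subalgebra of `End_K(A)` generated by
`x_0, …, x_n, ∂_0, …, ∂_n`. -/
def Weyl : Subalgebra K (Module.End K (Amb K n)) :=
  Algebra.adjoin K (Set.range (xOp K n) ∪ Set.range (dOp K n))

variable (d : Fin (n+1) → ℕ)

/-- The Euler field `E = Σ_i d_i x_i ∂_i`, as an endomorphism of `A`. -/
def euler : Module.End K (Amb K n) := ∑ i, (d i : K) • (xOp K n i * dOp K n i)

lemma xOp_mem (i : Fin (n+1)) : xOp K n i ∈ Weyl K n :=
  Algebra.subset_adjoin (Or.inl ⟨i, rfl⟩)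

lemma dOp_mem (i : Fin (n+1)) : dOp K n i ∈ Weyl K n :=
  Algebra.subset_adjoin (Or.inr ⟨i, rfl⟩)

lemma euler_mem : euler K n d ∈ Weyl K n :=
  Subalgebra.sum_mem _ fun i _ => Subalgebra.smul_mem _
    (Subalgebra.mul_mem _ (xOp_mem K n i) (dOp_mem K n i)) _

/-- `x_i` as an element of the Weyl algebra. -/
def xElt (i : Fin (n+1)) : Weyl K n := ⟨xOp K n i, xOp_mem K n i⟩

/-- `∂_i` as an element of the Weyl algebra. -/
def dElt (i : Fin (n+1)) : Weyl K n := ⟨dOp K n i, dOp_mem K n i⟩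

/-- The Euler field as an element of the Weyl algebra. -/
def eulerElt : Weyl K n := ⟨euler K n d, euler_mem K n d⟩

instance : HasQuotient (Weyl K n) (Submodule (Weyl K n) (Weyl K n)) :=
  @Submodule.hasQuotient (Weyl K n) (Weyl K n) _ _ _

/-- The left ideal `Dx_0 + Dx_1 + ⋯ + Dx_n` of the Weyl algebra. -/
def lIdeal : Submodule (Weyl K n) (Weyl K n) :=
  Submodule.span (Weyl K n) (Set.range (xElt K n))

/-- `Δ = D/(Dx_0 + ⋯ + Dx_n)`, as a left `D`-module. -/
abbrev Delta := (Weyl K n) ⧸ (lIdeal K n)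

/-- `∂^a = ∂_0^{a_0} ⋯ ∂_n^{a_n}` as an element of the Weyl algebra. -/
def dpow (a : Fin (n+1) →₀ ℕ) : Weyl K n :=
  (List.ofFn fun i => dElt K n i ^ a i).prod

section CanonicalCommutation

variable {k R ι : Type*} [Field k] [Ring R] [Algebra k R] [DecidableEq ι] {x y : ι → R}

variable (k x y) in
/-- The families `x` and `y` generate the `k`-algebra `R`, the `y_j` commute with one another, and
`x_i y_j = y_j x_i - δ_{ij}`. -/
structure IsWeylPair : Prop where
  x_mul_y : ∀ i j, x i * y j = y j * x i - (if i = j then 1 else 0)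
  y_mul_y : ∀ i j, y i * y j = y j * y i
  adjoin_eq_top : Algebra.adjoin k (Set.range x ∪ Set.range y) = ⊤

/-- The products of a word in the `y_j` and a word in the `x_i` span the algebra. -/
lemma span_yWord_mul_xWord (h : IsWeylPair k x y) :
    Submodule.span k (Set.range fun p : List ι × List ι =>
      (p.1.map y).prod * (p.2.map x).prod) = ⊤ := by
  set M := Submodule.span k (Set.range fun p : List ι × List ι =>
      (p.1.map y).prod * (p.2.map x).prod)
  have word_mem : ∀ l l' : List ι, (l.map y).prod * (l'.map x).prod ∈ M := fun l l' =>
    Submodule.subset_span ⟨(l, l'), rfl⟩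
  have y_mem : ∀ i, ∀ q ∈ M, y i * q ∈ M := by
    intro i q hq
    induction hq using Submodule.span_induction with
    | mem q hq =>
      obtain ⟨⟨l, l'⟩, rfl⟩ := hq
      simpa [mul_assoc] using word_mem (i :: l) l'
    | zero => simp
    | add p q _ _ hp hq => rw [mul_add]; exact M.add_mem hp hq
    | smul c q _ hq => rw [mul_smul_comm]; exact M.smul_mem c hq
  have x_word_mem : ∀ i (l l' : List ι), x i * ((l.map y).prod * (l'.map x).prod) ∈ M := by
    intro i l l'
    induction l with
    | nil => simpa using word_mem [] (i :: l')
    | cons j l ih =>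
      have : x i * (((j :: l).map y).prod * (l'.map x).prod) =
          y j * (x i * ((l.map y).prod * (l'.map x).prod)) -
            (if i = j then (1 : k) else 0) • ((l.map y).prod * (l'.map x).prod) := by
        rw [List.map_cons, List.prod_cons, mul_assoc, ← mul_assoc, h.x_mul_y, sub_mul, mul_assoc]
        split_ifs <;> simp
      rw [this]
      exact M.sub_mem (y_mem j _ ih) (M.smul_mem _ (word_mem l l'))
  have x_mem : ∀ i, ∀ q ∈ M, x i * q ∈ M := by
    intro i q hq
    induction hq using Submodule.span_induction with
    | mem q hq => obtain ⟨⟨l, l'⟩, rfl⟩ := hq; exact x_word_mem i l l'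
    | zero => simp
    | add p q _ _ hp hq => rw [mul_add]; exact M.add_mem hp hq
    | smul c q _ hq => rw [mul_smul_comm]; exact M.smul_mem c hq
  have stable : ∀ P : R, ∀ q ∈ M, P * q ∈ M := by
    intro P
    have hP : P ∈ Algebra.adjoin k (Set.range x ∪ Set.range y) := h.adjoin_eq_top ▸ Algebra.mem_top
    induction hP using Algebra.adjoin_induction with
    | mem P hP =>
      rcases hP with ⟨i, rfl⟩ | ⟨i, rfl⟩
      · exact x_mem i
      · exact y_mem i
    | algebraMap c => intro q hq; rw [← Algebra.smul_def]; exact M.smul_mem c hq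
    | add P Q _ _ hP hQ => intro q hq; rw [add_mul]; exact M.add_mem (hP q hq) (hQ q hq)
    | mul P Q _ _ hP hQ => intro q hq; rw [mul_assoc]; exact hP _ (hQ q hq)
  rw [eq_top_iff]
  rintro P -
  simpa using stable P 1 (by simpa using word_mem [] [])

/-- Modulo the left ideal generated by the `x_i`, the words in the `y_j` span. -/
lemma span_mk_yWord (h : IsWeylPair k x y) :
    Submodule.span k (Set.range fun l : List ι =>
      (Submodule.Quotient.mk (l.map y).prod : R ⧸ Submodule.span R (Set.range x))) = ⊤ := by
  rw [eq_top_iff]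
  rintro v -
  obtain ⟨q, rfl⟩ := Submodule.Quotient.mk_surjective _ v
  have hq : q ∈ Submodule.span k (Set.range fun p : List ι × List ι =>
      (p.1.map y).prod * (p.2.map x).prod) := by
    rw [span_yWord_mul_xWord h]; trivial
  induction hq using Submodule.span_induction with
  | mem q hq =>
    obtain ⟨⟨l, l'⟩, rfl⟩ := hq
    rcases List.eq_nil_or_concat l' with rfl | ⟨l', i, rfl⟩
    · exact Submodule.subset_span ⟨l, by simp⟩
    · have : (l.map y).prod * ((l'.concat i).map x).prod ∈ Submodule.span R (Set.range x) := by
        rw [List.concat_eq_append, List.map_append, List.prod_append, List.map_singleton,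
          List.prod_singleton, ← mul_assoc]
        exact Submodule.smul_mem _ _ (Submodule.subset_span ⟨i, rfl⟩)
      rw [(Submodule.Quotient.mk_eq_zero _).2 this]
      exact Submodule.zero_mem _
  | zero => exact Submodule.zero_mem _
  | add p q _ _ hp hq => rw [Submodule.Quotient.mk_add]; exact Submodule.add_mem _ hp hq
  | smul c q _ hq => rw [Submodule.Quotient.mk_smul]; exact Submodule.smul_mem _ c hq

variable [Fintype ι]

lemma euler_mul_y (h : IsWeylPair k x y) (c : ι → k) (j : ι) :
    (∑ i, c i • (x i * y i)) * y j = y j * (∑ i, c i • (x i * y i)) - c j • y j := by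
  have hterm : ∀ i, c i • (x i * y i) * y j =
      y j * (c i • (x i * y i)) - (if i = j then c i • y i else 0) := by
    intro i
    rw [smul_mul_assoc, mul_assoc, h.y_mul_y, ← mul_assoc, h.x_mul_y, sub_mul, smul_sub, mul_smul_comm,
      mul_assoc]
    split_ifs <;> simp
  rw [Finset.sum_mul, Finset.sum_congr rfl fun i _ => hterm i, Finset.sum_sub_distrib,
    ← Finset.mul_sum]
  simp

/-- The Euler element `∑ c_i x_i y_i` acts on the class of a word in the `y_j` by a scalar. -/
lemma euler_smul_mk_yWord (h : IsWeylPair k x y) (c : ι → k) (l : List ι) :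
    (∑ i, c i • (x i * y i)) •
        (Submodule.Quotient.mk (l.map y).prod : R ⧸ Submodule.span R (Set.range x)) =
      (-(∑ i, c i + (l.map c).sum)) • Submodule.Quotient.mk (l.map y).prod := by
  induction l with
  | nil =>
    rw [← Submodule.Quotient.mk_smul, ← Submodule.Quotient.mk_smul, Submodule.Quotient.eq]
    have : (∑ i, c i • (x i * y i)) • ((List.map y []).prod) -
        (-(∑ i, c i + (List.map c []).sum)) • (List.map y []).prod =
          ∑ i, (c i • y i) • x i := by
      simp [h.x_mul_y, smul_sub, Finset.sum_sub_distrib, Finset.sum_smul]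
    rw [this]
    exact Submodule.sum_mem _ fun i _ =>
      Submodule.smul_mem _ _ (Submodule.subset_span ⟨i, rfl⟩)
  | cons j l ih =>
    have hmk : (Submodule.Quotient.mk ((j :: l).map y).prod : R ⧸ Submodule.span R (Set.range x)) =
        y j • Submodule.Quotient.mk (l.map y).prod := by
      rw [← Submodule.Quotient.mk_smul]; simp
    rw [hmk, ← mul_smul, euler_mul_y h, sub_smul, mul_smul, ih, smul_assoc,
      smul_comm (y j), ← sub_smul]
    congr 1
    simp only [List.map_cons, List.sum_cons]
    ring

/-- The class of a word in the `y_j` is nonzero as soon as the `x_i` generate a proper left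
ideal. -/
lemma mk_yWord_ne_zero [CharZero k] (h : IsWeylPair k x y)
    (hone : (1 : R) ∉ Submodule.span R (Set.range x)) (l : List ι) :
    (Submodule.Quotient.mk (l.map y).prod : R ⧸ Submodule.span R (Set.range x)) ≠ 0 := by
  induction l with
  | nil => simpa [Submodule.Quotient.mk_eq_zero] using hone
  | cons j l ih =>
    intro hzero
    have hmk : (Submodule.Quotient.mk ((j :: l).map y).prod : R ⧸ Submodule.span R (Set.range x)) =
        y j • Submodule.Quotient.mk (l.map y).prod := by
      rw [← Submodule.Quotient.mk_smul]; simp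
    have heig := euler_smul_mk_yWord h (fun i => if i = j then (1 : k) else 0) l
    have hsum : (∑ i, (if i = j then (1 : k) else 0) • (x i * y i)) = x j * y j := by simp
    rw [hsum, mul_smul, ← hmk, hzero, smul_zero] at heig
    have hcount : (l.map fun i => if i = j then (1 : k) else 0).sum = (l.count j : k) := by
      clear ih hzero hmk heig
      induction l with
      | nil => simp
      | cons a l ih => simp [ih, List.count_cons, add_comm]
    rcases smul_eq_zero.1 heig.symm with h0 | h0
    · rw [hcount, neg_eq_zero] at h0
      simp only [Finset.sum_ite_eq', Finset.mem_univ, if_true] at h0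
      exact Nat.cast_add_one_ne_zero (R := k) (l.count j) (by rw [add_comm]; exact h0)
    · exact ih h0

lemma list_sum_map_eq_sum_count (c : ι → k) (l : List ι) :
    (l.map c).sum = ∑ i, (l.count i : k) * c i := by
  rw [Finset.sum_list_map_count]
  simp only [nsmul_eq_mul]
  refine Finset.sum_subset (Finset.subset_univ _) fun i _ hi => ?_
  rw [List.count_eq_zero_of_not_mem (by simpa using hi)]
  simp

/-- The eigenvalues of the Euler element `∑ c_i x_i y_i` modulo the left ideal generated by the
`x_i`. -/
theorem euler_eigenvalue_iff [CharZero k] (h : IsWeylPair k x y)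
    (hone : (1 : R) ∉ Submodule.span R (Set.range x)) (c : ι → k) (t : k) :
    (∃ v : R ⧸ Submodule.span R (Set.range x), v ≠ 0 ∧ (∑ i, c i • (x i * y i)) • v = t • v) ↔
      ∃ b : ι → ℕ, t = -(∑ i, c i + ∑ i, (b i : k) * c i) := by
  constructor
  · rintro ⟨v, hv, hvt⟩
    by_contra! hne
    set T : Module.End k (R ⧸ Submodule.span R (Set.range x)) :=
      Algebra.lsmul k k _ (∑ i, c i • (x i * y i))
    have hle : Submodule.span k (Set.range fun l : List ι =>
        (Submodule.Quotient.mk (l.map y).prod : R ⧸ Submodule.span R (Set.range x))) ≤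
          ⨆ (s : k) (_ : s ≠ t), T.eigenspace s := by
      rw [Submodule.span_le]
      rintro _ ⟨l, rfl⟩
      refine Submodule.mem_iSup_of_mem (-(∑ i, c i + (l.map c).sum)) (Submodule.mem_iSup_of_mem
        ?_ (Module.End.mem_eigenspace_iff.2 (euler_smul_mk_yWord h c l)))
      rw [list_sum_map_eq_sum_count]
      exact (hne _).symm
    rw [span_mk_yWord h] at hle
    exact hv (Submodule.disjoint_def.1 (T.eigenspaces_iSupIndep t) v
      (Module.End.mem_eigenspace_iff.2 hvt) (hle trivial))
  · rintro ⟨b, rfl⟩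
    obtain ⟨l, hl⟩ : ∃ l : List ι, ∀ i, l.count i = b i := by
      refine ⟨(Finsupp.toMultiset (Finsupp.equivFunOnFinite.symm b)).toList, fun i => ?_⟩
      rw [← Multiset.coe_count, Multiset.coe_toList, Finsupp.count_toMultiset]
      rfl
    refine ⟨_, mk_yWord_ne_zero h hone l, ?_⟩
    rw [euler_smul_mk_yWord h c l, list_sum_map_eq_sum_count]
    simp only [hl]

end CanonicalCommutation
/-- The canonical commutation relation `x_i ∂_j = ∂_j x_i - δ_{ij}`. -/
lemma xElt_mul_dElt (i j : Fin (n+1)) :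
    xElt K n i * dElt K n j = dElt K n j * xElt K n i - (if i = j then 1 else 0) := by
  apply Subtype.ext
  apply LinearMap.ext
  intro f
  by_cases h : i = j
  · subst h
    simp [xElt, dElt, xOp, dOp, Derivation.leibniz, mul_comm]
  · simp [xElt, dElt, xOp, dOp, Derivation.leibniz, h]

lemma dElt_mul_dElt (i j : Fin (n+1)) :
    dElt K n i * dElt K n j = dElt K n j * dElt K n i := by
  apply Subtype.ext
  have h : ⁅(pderiv i : Derivation K (Amb K n) (Amb K n)), pderiv j⁆ = 0 :=
    MvPolynomial.derivation_ext fun k => by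
      rw [Derivation.commutator_apply]
      simp [pderiv_X, Pi.single_apply, apply_ite]
  apply LinearMap.ext
  intro f
  have := congrArg (fun D : Derivation K (Amb K n) (Amb K n) => D f) h
  rw [Derivation.commutator_apply] at this
  exact sub_eq_zero.1 this

lemma adjoin_xElt_dElt :
    Algebra.adjoin K (Set.range (xElt K n) ∪ Set.range (dElt K n)) = ⊤ := by
  have h := Algebra.adjoin_adjoin_coe_preimage (R := K)
    (s := Set.range (xOp K n) ∪ Set.range (dOp K n))
  have hs : (Set.range (xElt K n) ∪ Set.range (dElt K n) : Set (Weyl K n)) =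
      Subtype.val ⁻¹' (Set.range (xOp K n) ∪ Set.range (dOp K n)) := by
    ext P
    simp [Subtype.ext_iff, xElt, dElt]
  rw [hs]
  exact h

lemma isWeylPair_xElt_dElt : IsWeylPair K (xElt K n) (dElt K n) where
  x_mul_y := xElt_mul_dElt K n
  y_mul_y := dElt_mul_dElt K n
  adjoin_eq_top := adjoin_xElt_dElt K n

/-- The operators on `A` whose diagonal matrix entry at `x^m` is polynomial in `m`, with a
polynomial that vanishes at `(-1, …, -1)`. -/
def diagVanishing : Submodule K (Module.End K (Amb K n)) where
  carrier := {P | ∃ p : MvPolynomial (Fin (n+1)) K,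
    (∀ m : Fin (n+1) →₀ ℕ, coeff m (P (monomial m 1)) = eval (fun i => (m i : K)) p) ∧
      eval (fun _ => -1) p = 0}
  zero_mem' := ⟨0, by simp⟩
  add_mem' := by
    rintro P Q ⟨p, hp, hp'⟩ ⟨q, hq, hq'⟩
    exact ⟨p + q, by simp [hp, hq, hp', hq']⟩
  smul_mem' := by
    rintro c P ⟨p, hp, hp'⟩
    exact ⟨C c * p, by simp [hp, hp']⟩

lemma one_notMem_diagVanishing : (1 : Module.End K (Amb K n)) ∉ diagVanishing K n := by
  rintro ⟨p, hp, hp'⟩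
  have : p = 1 := by
    refine MvPolynomial.funext_set (fun _ => Set.range (Nat.cast : ℕ → K))
      (fun _ => Set.infinite_range_of_injective Nat.cast_injective) ?_
    intro x hx
    choose m hm using fun i => hx i (Set.mem_univ i)
    have := hp (Finsupp.equivFunOnFinite.symm m)
    simp [hm] at this
    simp [← this]
  simp [this] at hp'

/-- Matrix entries of `∂^l` along a fixed shift are polynomial, and the polynomial vanishes at
`(-1, …, -1)` if the shift starts at a positive and ends at a zero exponent of some `x_i`. -/
lemma exists_eval_eq_coeff_dWord (l : List (Fin (n+1))) (a b : Fin (n+1) →₀ ℕ) :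
    ∃ p : MvPolynomial (Fin (n+1)) K,
      (∀ m : Fin (n+1) →₀ ℕ,
        coeff (m + b) ((((l.map (dElt K n)).prod : Weyl K n) : Module.End K (Amb K n))
          (monomial (m + a) 1)) =
          eval (fun i => (m i : K)) p) ∧
      ((∃ i, 0 < a i ∧ b i = 0) → eval (fun _ => -1) p = 0) := by
  classical
  induction l generalizing b with
  | nil =>
    refine ⟨if a = b then 1 else 0, fun m => ?_, ?_⟩
    · simp only [List.map_nil, List.prod_nil, OneMemClass.coe_one, Module.End.one_apply,
        coeff_monomial, add_right_inj]
      split_ifs <;> simp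
    · rintro ⟨i, hi, hi'⟩
      rw [if_neg (by rintro rfl; omega), map_zero]
  | cons j l ih =>
    obtain ⟨p, hp, hp'⟩ := ih (b + Finsupp.single j 1)
    refine ⟨(X j + C (b j : K) + 1) * p, fun m => ?_, ?_⟩
    · simp only [List.map_cons, List.prod_cons, MulMemClass.coe_mul, Module.End.mul_apply, dElt,
        dOp]
      erw [coeff_pderiv]
      rw [add_assoc, hp]
      simp [mul_comm]
    · rintro ⟨i, hi, hi'⟩
      by_cases hj : b j = 0
      · simp [hj]
      · have hij : j ≠ i := by rintro rfl; exact hj hi'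
        rw [map_mul, hp' ⟨i, hi, by simp [hi', hij]⟩, mul_zero]

lemma exists_xWord_monomial (l : List (Fin (n+1))) :
    ∃ a : Fin (n+1) →₀ ℕ, ∀ m : Fin (n+1) →₀ ℕ,
      (((l.map (xElt K n)).prod : Weyl K n) : Module.End K (Amb K n)) (monomial m 1) =
        monomial (m + a) 1 := by
  induction l with
  | nil => exact ⟨0, by simp⟩
  | cons j l ih =>
    obtain ⟨a, ha⟩ := ih
    refine ⟨a + Finsupp.single j 1, fun m => ?_⟩
    simp only [List.map_cons, List.prod_cons, MulMemClass.coe_mul, Module.End.mul_apply, ha,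
      xElt, xOp, LinearMap.mulLeft_apply, X, monomial_mul, mul_one]
    rw [add_comm (Finsupp.single j 1), add_assoc]

lemma mul_xElt_mem_diagVanishing (Q : Weyl K n) (i : Fin (n+1)) :
    ((Q * xElt K n i : Weyl K n) : Module.End K (Amb K n)) ∈ diagVanishing K n := by
  have hQ : Q ∈ Submodule.span K (Set.range fun p : List (Fin (n+1)) × List (Fin (n+1)) =>
      (p.1.map (dElt K n)).prod * (p.2.map (xElt K n)).prod) := by
    rw [span_yWord_mul_xWord (isWeylPair_xElt_dElt K n)]; trivial
  induction hQ using Submodule.span_induction with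
  | mem Q hQ =>
    obtain ⟨⟨l, l'⟩, rfl⟩ := hQ
    obtain ⟨a, ha⟩ := exists_xWord_monomial K n l'
    obtain ⟨p, hp, hp'⟩ := exists_eval_eq_coeff_dWord K n l (Finsupp.single i 1 + a) 0
    refine ⟨p, fun m => ?_, hp' ⟨i, by simp, by simp⟩⟩
    rw [← hp m]
    simp only [MulMemClass.coe_mul, Module.End.mul_apply, xElt, xOp, LinearMap.mulLeft_apply, X,
      monomial_mul, mul_one]
    rw [ha, add_zero, add_comm (Finsupp.single i 1) m, add_assoc]
  | zero => simp
  | add P Q _ _ hP hQ => rw [add_mul]; exact Submodule.add_mem _ hP hQ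
  | smul c Q _ hQ => rw [smul_mul_assoc]; exact Submodule.smul_mem _ c hQ

lemma one_notMem_lIdeal : (1 : Weyl K n) ∉ lIdeal K n := by
  intro h
  obtain ⟨Q, hQ⟩ := (Submodule.mem_span_range_iff_exists_fun _).1 h
  apply one_notMem_diagVanishing K n
  have : (1 : Module.End K (Amb K n)) = ((∑ i, Q i • xElt K n i : Weyl K n) :) := by
    rw [hQ]; rfl
  rw [this, AddSubmonoidClass.coe_finsetSum]
  exact Submodule.sum_mem _ fun i _ => mul_xElt_mem_diagVanishing K n (Q i) i

lemma eulerElt_eq : eulerElt K n d = ∑ i, (d i : K) • (xElt K n i * dElt K n i) := by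
  apply Subtype.ext
  rw [AddSubmonoidClass.coe_finsetSum]
  rfl

/-- For `t ∈ K`, the `t`-eigenspace of `E` acting on `Δ` is nonzero iff
`t = −(Σ_j d_j + s)` for some `s ∈ 𝒜`, where `𝒜` is the additive submonoid of `ℕ`
generated by `d_0, …, d_n`; i.e. the set of `E`-eigenvalues on `Δ` is `−Σ_j d_j − 𝒜`. -/
theorem stmt6 (hd : ∀ i, 0 < d i) (t : K) :
    (∃ v : Delta K n, v ≠ 0 ∧ eulerElt K n d • v = t • v) ↔
      ∃ b : Fin (n+1) → ℕ, t = -((∑ j, (d j : K)) + ∑ i, (b i : K) * (d i : K)) := by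
  rw [eulerElt_eq]
  exact euler_eigenvalue_iff (isWeylPair_xElt_dElt K n) (one_notMem_lIdeal K n)
    (fun i => (d i : K)) t

end
end

section
/- Assume n ≥ 2 and let λ ∈ K. If m ∈ D satisfies x_i∘m ∈ D(E−λ) for every i = 0,…,n, then m ∈ D(E−λ). (Equivalently: the degree-zero socle Hom_A(A/A_{≥1}, D/D(E−λ)) vanishes, i.e., no nonzero class in D/D(E−λ) is annihilated by all the x_i.) -/
/-!
Context: `K` is a field of characteristic zero, `n ≥ 0`, and `d 0, …, d n` are
positive integers.  `A = K[x_0, …, x_n]` is the polynomial ring, graded with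
`x i` of weighted degree `d i`.  Inside `End_K(A)` we have the multiplication
operators `x i`, the partial derivatives `∂ i`, the Weyl algebra `D` generated
by them, and the Euler field `E = Σ_i d_i x_i ∂_i`.
-/

open MvPolynomial Finset

set_option linter.unusedSectionVars false
set_option synthInstance.maxHeartbeats 1000000
set_option maxHeartbeats 2000000

noncomputable section

variable (K : Type) [Field K] [CharZero K] (n : ℕ)

variable (d : Fin (n+1) → ℕ)

/-- The operator `∂^α`, given on monomials by falling factorials. -/
def dPow (α : Fin (n+1) →₀ ℕ) : Module.End K (Amb K n) :=
  (basisMonomials (Fin (n+1)) K).constr K fun γ =>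
    monomial (γ - α) (∏ i, ((γ i).descFactorial (α i) : K))

lemma dPow_monomial (α γ : Fin (n+1) →₀ ℕ) :
    dPow K n α (monomial γ 1) = monomial (γ - α) (∏ i, ((γ i).descFactorial (α i) : K)) := by
  have h := (basisMonomials (Fin (n+1)) K).constr_basis K
    (fun γ => monomial (γ - α) (∏ i, ((γ i).descFactorial (α i) : K))) γ
  rwa [coe_basisMonomials] at h

lemma end_ext {u v : Module.End K (Amb K n)}
    (h : ∀ γ, u (monomial γ 1) = v (monomial γ 1)) : u = v :=
  (basisMonomials (Fin (n+1)) K).ext fun γ => by simpa using h γ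

lemma dPow_zero : dPow K n 0 = 1 :=
  end_ext K n fun γ => by rw [dPow_monomial]; simp

lemma dOp_mul_dPow (i : Fin (n+1)) (α : Fin (n+1) →₀ ℕ) :
    dOp K n i * dPow K n α = dPow K n (α + Finsupp.single i 1) := by
  refine end_ext K n fun γ => ?_
  rw [Module.End.mul_apply, dPow_monomial, dPow_monomial]
  change pderiv i _ = _
  rw [pderiv_monomial, tsub_tsub]
  congr 1
  rw [← Finset.mul_prod_erase univ _ (mem_univ i), ← Finset.mul_prod_erase univ _ (mem_univ i)]
  have h : ∀ j ∈ univ.erase i, ((γ j).descFactorial ((α + Finsupp.single i 1 : Fin (n+1) →₀ ℕ) j) : K)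
      = ((γ j).descFactorial (α j) : K) := fun j hj => by
    rw [Finsupp.add_apply, Finsupp.single_eq_of_ne (ne_of_mem_erase hj), add_zero]
  rw [Finset.prod_congr rfl h]
  simp only [Finsupp.add_apply, Finsupp.single_eq_same, Nat.descFactorial_succ,
    Finsupp.tsub_apply, Nat.cast_mul]
  ring

lemma dPow_mem (α : Fin (n+1) →₀ ℕ) : dPow K n α ∈ Weyl K n := by
  have hadd : ∀ (k : ℕ) (i : Fin (n+1)) (β : Fin (n+1) →₀ ℕ), dPow K n β ∈ Weyl K n →
      dPow K n (β + Finsupp.single i k) ∈ Weyl K n := by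
    intro k i β hβ
    induction k with
    | zero => rwa [Finsupp.single_zero, add_zero]
    | succ k ih =>
      rw [Finsupp.single_add, ← add_assoc, ← dOp_mul_dPow]
      exact (Weyl K n).mul_mem (dOp_mem K n i) ih
  induction α using Finsupp.induction with
  | zero => rw [dPow_zero]; exact (Weyl K n).one_mem
  | single_add i k β _ _ ih => rw [add_comm (Finsupp.single i k)]; exact hadd k i β ih

/-- The operator `∑ α, a α ∂^α` with polynomial coefficients on the left. -/
def normalForm : ((Fin (n+1) →₀ ℕ) →₀ Amb K n) →ₗ[K] Module.End K (Amb K n) :=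
  Finsupp.lsum K fun α => (LinearMap.mulRight K (dPow K n α)).comp (LinearMap.mul K (Amb K n))

lemma normalForm_single (α : Fin (n+1) →₀ ℕ) (p : Amb K n) :
    normalForm K n (Finsupp.single α p) = LinearMap.mulLeft K p * dPow K n α := by
  rw [normalForm, Finsupp.lsum_single]
  rfl

lemma normalForm_apply (a : (Fin (n+1) →₀ ℕ) →₀ Amb K n) (f : Amb K n) :
    normalForm K n a f = ∑ α ∈ a.support, a α * dPow K n α f := by
  rw [normalForm, Finsupp.lsum_apply, Finsupp.sum, LinearMap.sum_apply]
  rfl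

lemma mulLeft_mem (p : Amb K n) : LinearMap.mulLeft K p ∈ Weyl K n := by
  induction p using MvPolynomial.induction_on with
  | C c =>
    convert (Weyl K n).algebraMap_mem c using 1
    refine LinearMap.ext fun f => ?_
    simp [C_mul']
  | add p q hp hq =>
    convert (Weyl K n).add_mem hp hq using 1
    refine LinearMap.ext fun f => ?_
    simp [add_mul]
  | mul_X p i hp =>
    rw [LinearMap.mulLeft_mul]
    exact (Weyl K n).mul_mem hp (xOp_mem K n i)

lemma normalForm_mem (a : (Fin (n+1) →₀ ℕ) →₀ Amb K n) : normalForm K n a ∈ Weyl K n := by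
  induction a using Finsupp.induction_linear with
  | zero => rw [map_zero]; exact (Weyl K n).zero_mem
  | add a b ha hb => rw [map_add]; exact (Weyl K n).add_mem ha hb
  | single α p =>
    rw [normalForm_single]
    exact (Weyl K n).mul_mem (mulLeft_mem K n p) (dPow_mem K n α)

lemma dOp_mul_mulLeft (i : Fin (n+1)) (p : Amb K n) :
    dOp K n i * LinearMap.mulLeft K p
      = LinearMap.mulLeft K p * dOp K n i + LinearMap.mulLeft K (pderiv i p) := by
  refine LinearMap.ext fun f => ?_
  change pderiv i (p * f) = p * pderiv i f + pderiv i p * f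
  rw [Derivation.leibniz, smul_eq_mul, smul_eq_mul]
  ring

lemma mul_normalForm_mem_range {u : Module.End K (Amb K n)} (hu : u ∈ Weyl K n) :
    ∀ a, u * normalForm K n a ∈ LinearMap.range (normalForm K n) := by
  induction hu using Algebra.adjoin_induction with
  | mem u hu =>
    intro a
    induction a using Finsupp.induction_linear with
    | zero => rw [map_zero, mul_zero]; exact zero_mem _
    | add a b ha hb => rw [map_add, mul_add]; exact add_mem ha hb
    | single α p =>
      rw [normalForm_single, ← mul_assoc]
      rcases hu with ⟨i, rfl⟩ | ⟨i, rfl⟩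
      · refine ⟨Finsupp.single α (X i * p), ?_⟩
        rw [normalForm_single, LinearMap.mulLeft_mul]
        rfl
      · refine ⟨Finsupp.single (α + Finsupp.single i 1) p + Finsupp.single α (pderiv i p), ?_⟩
        rw [map_add, normalForm_single, normalForm_single, dOp_mul_mulLeft, add_mul, mul_assoc,
          dOp_mul_dPow]
  | algebraMap c =>
    intro a
    exact ⟨c • a, by rw [map_smul, Algebra.smul_def]⟩
  | add u v _ _ hu hv =>
    intro a
    rw [add_mul]
    exact add_mem (hu a) (hv a)
  | mul u v _ _ hu hv =>
    intro a
    obtain ⟨b, hb⟩ := hv a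
    rw [mul_assoc, ← hb]
    exact hu b

lemma exists_normalForm {u : Module.End K (Amb K n)} (hu : u ∈ Weyl K n) :
    ∃ a, normalForm K n a = u := by
  have h := mul_normalForm_mem_range K n hu (Finsupp.single 0 1)
  rwa [normalForm_single, dPow_zero, LinearMap.mulLeft_one, mul_one, ← Module.End.one_eq_id,
    mul_one] at h

lemma dvd_coeff_of_dvd_normalForm (q : Amb K n) (a : (Fin (n+1) →₀ ℕ) →₀ Amb K n)
    (h : ∀ f, q ∣ normalForm K n a f) (α : Fin (n+1) →₀ ℕ) : q ∣ a α := by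
  induction α using WellFoundedLT.induction with
  | ind α ih =>
    by_cases hα : α ∈ a.support
    · have hsum := h (monomial α 1)
      rw [normalForm_apply, ← Finset.add_sum_erase _ _ hα] at hsum
      have hrest : q ∣ ∑ β ∈ a.support.erase α, a β * dPow K n β (monomial α 1) := by
        refine Finset.dvd_sum fun β hβ => ?_
        by_cases hle : β ≤ α
        · exact (ih β (lt_of_le_of_ne hle (ne_of_mem_erase hβ))).mul_right _
        · obtain ⟨i, hi⟩ : ∃ i, α i < β i := by
            by_contra! hc
            exact hle hc
          rw [dPow_monomial, Finset.prod_eq_zero (mem_univ i)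
            (by rw [Nat.descFactorial_of_lt hi, Nat.cast_zero]), map_zero, mul_zero]
          exact dvd_zero q
      have hmain := (dvd_add_left hrest).1 hsum
      rw [dPow_monomial, tsub_self] at hmain
      have hunit : IsUnit (monomial (0 : Fin (n+1) →₀ ℕ)
          (∏ i, ((α i).descFactorial (α i) : K))) := by
        refine IsUnit.map C (isUnit_iff_ne_zero.2 (Finset.prod_ne_zero_iff.2 fun i _ => ?_))
        rw [Nat.descFactorial_self]
        exact_mod_cast (α i).factorial_ne_zero
      exact hunit.dvd_mul_right.1 hmain
    · rw [Finsupp.notMem_support_iff.1 hα]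
      exact dvd_zero q

/-- A differential operator all of whose values are multiples of `q` is left divisible by `q`. -/
lemma exists_eq_mulLeft_mul (q : Amb K n) {u : Module.End K (Amb K n)} (hu : u ∈ Weyl K n)
    (h : ∀ f, q ∣ u f) : ∃ w ∈ Weyl K n, u = LinearMap.mulLeft K q * w := by
  obtain ⟨a, rfl⟩ := exists_normalForm K n hu
  choose b hb using dvd_coeff_of_dvd_normalForm K n q a h
  refine ⟨_, normalForm_mem K n (Finsupp.onFinset a.support
    (fun α => if α ∈ a.support then b α else 0) fun α hα => by_contra fun hc => hα (if_neg hc)), ?_⟩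
  refine LinearMap.ext fun f => ?_
  rw [Module.End.mul_apply, LinearMap.mulLeft_apply, normalForm_apply, normalForm_apply,
    Finset.mul_sum]
  symm
  refine (Finset.sum_subset Finsupp.support_onFinset_subset fun α hα hα' => ?_).trans
    (Finset.sum_congr rfl fun α hα => ?_)
  · rw [Finsupp.notMem_support_iff.1 hα', zero_mul, mul_zero]
  · rw [Finsupp.onFinset_apply, if_pos hα, ← mul_assoc, ← hb]

/-- `u` is killed by `k` successive commutators with `x`. -/
def AdNilpotent {R : Type*} [Ring R] (x : R) : ℕ → R → Prop
  | 0, u => u = 0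
  | k + 1, u => AdNilpotent x k (u * x - x * u)

namespace AdNilpotent

variable {R : Type*} [Ring R] {x : R}

lemma zero : ∀ k, AdNilpotent x k 0
  | 0 => rfl
  | k + 1 => by
    change AdNilpotent x k (0 * x - x * 0)
    rw [zero_mul, mul_zero, sub_zero]
    exact zero k

lemma of_commute {u : R} (h : Commute u x) (k : ℕ) : AdNilpotent x (k + 1) u := by
  change AdNilpotent x k (u * x - x * u)
  rw [h.eq, sub_self]
  exact zero k

lemma succ : ∀ {k : ℕ} {u : R}, AdNilpotent x k u → AdNilpotent x (k + 1) u
  | 0, u, h => by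
    rw [show u = 0 from h]
    exact zero 1
  | k + 1, u, h => succ (k := k) (u := u * x - x * u) h

lemma mono {k l : ℕ} (hkl : k ≤ l) {u : R} (h : AdNilpotent x k u) : AdNilpotent x l u :=
  Nat.le_induction h (fun _ _ => succ) l hkl

lemma add : ∀ {k : ℕ} {u v : R}, AdNilpotent x k u → AdNilpotent x k v → AdNilpotent x k (u + v)
  | 0, u, v, hu, hv => by
    rw [show u = 0 from hu, show v = 0 from hv, add_zero]
    exact zero 0
  | k + 1, u, v, hu, hv => by
    change AdNilpotent x k ((u + v) * x - x * (u + v))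
    have h := add (k := k) (u := u * x - x * u) (v := v * x - x * v) hu hv
    convert h using 1
    noncomm_ring

lemma mul : ∀ {k l : ℕ} {u v : R}, AdNilpotent x k u → AdNilpotent x l v →
    AdNilpotent x (k + l) (u * v)
  | 0, l, u, v, hu, _ => by
    rw [show u = 0 from hu, zero_mul]
    exact zero _
  | k + 1, 0, u, v, _, hv => by
    rw [show v = 0 from hv, mul_zero]
    exact zero _
  | k + 1, l + 1, u, v, hu, hv => by
    change AdNilpotent x (k + 1 + l) (u * v * x - x * (u * v))
    have h₁ : AdNilpotent x (k + 1 + l) (u * (v * x - x * v)) := mul hu hv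
    have h₂ : AdNilpotent x (k + (l + 1)) ((u * x - x * u) * v) := mul hu hv
    rw [← Nat.add_right_comm k l 1] at h₁ ⊢
    convert add h₁ h₂ using 1
    noncomm_ring
termination_by k l => k + l

end AdNilpotent

lemma exists_adNilpotent (i : Fin (n+1)) {u : Module.End K (Amb K n)} (hu : u ∈ Weyl K n) :
    ∃ k, AdNilpotent (xOp K n i) k u := by
  have hx : ∀ p : Amb K n, Commute (LinearMap.mulLeft K p) (xOp K n i) := fun p =>
    LinearMap.ext fun f => mul_left_comm p (X i) f
  induction hu using Algebra.adjoin_induction with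
  | mem u hu =>
    rcases hu with ⟨j, rfl⟩ | ⟨j, rfl⟩
    · exact ⟨1, .of_commute (hx _) 0⟩
    · refine ⟨2, ?_⟩
      change AdNilpotent (xOp K n i) 1 (dOp K n j * xOp K n i - xOp K n i * dOp K n j)
      rw [xOp, dOp_mul_mulLeft, add_sub_cancel_left]
      exact .of_commute (hx _) 0
  | algebraMap c => exact ⟨1, .of_commute (Algebra.commutes c _) 0⟩
  | add u v _ _ hu hv =>
    obtain ⟨k, hk⟩ := hu
    obtain ⟨l, hl⟩ := hv
    exact ⟨max k l, (hk.mono (le_max_left k l)).add (hl.mono (le_max_right k l))⟩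
  | mul u v _ _ hu hv =>
    obtain ⟨k, hk⟩ := hu
    obtain ⟨l, hl⟩ := hv
    exact ⟨k + l, hk.mul hl⟩

lemma AdNilpotent.apply_eq_zero (i : Fin (n+1)) (f : Amb K n) :
    ∀ {k : ℕ} {u : Module.End K (Amb K n)}, AdNilpotent (xOp K n i) k u →
      (∀ j, u (X i ^ (j + 1) * f) = 0) → u f = 0
  | 0, u, hu, _ => by rw [show u = 0 from hu, LinearMap.zero_apply]
  | k + 1, u, hu, h => by
    have hcomm : ∀ g, (u * xOp K n i - xOp K n i * u) g = u (X i * g) - X i * u g := fun _ => rfl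
    have hf := AdNilpotent.apply_eq_zero i f (k := k) (u := u * xOp K n i - xOp K n i * u) hu
      fun j => by rw [hcomm, ← mul_assoc, ← pow_succ', h, h, mul_zero, sub_zero]
    have h₀ := h 0
    rw [zero_add, pow_one] at h₀
    rw [hcomm, h₀, zero_sub, neg_eq_zero] at hf
    exact (mul_eq_zero.1 hf).resolve_left (X_ne_zero i)

lemma euler_monomial (γ : Fin (n+1) →₀ ℕ) :
    euler K n d (monomial γ 1) = ((∑ i, d i * γ i : ℕ) : K) • monomial γ 1 := by
  rw [euler, LinearMap.sum_apply, Nat.cast_sum, Finset.sum_smul]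
  refine Finset.sum_congr rfl fun i _ => ?_
  change (d i : K) • (X i * pderiv i (monomial γ (1 : K))) = _
  rw [X_mul_pderiv_monomial, ← Nat.cast_smul_eq_nsmul K, smul_smul, Nat.cast_mul]

lemma eq_zero_of_mul_euler_sub_eq_zero (hd : ∀ i, 0 < d i) (t : K)
    {u : Module.End K (Amb K n)} (hu : u ∈ Weyl K n) (h : u * (euler K n d - t • 1) = 0) :
    u = 0 := by
  have hne : ∀ γ : Fin (n+1) →₀ ℕ, ((∑ i, d i * γ i : ℕ) : K) ≠ t → u (monomial γ 1) = 0 := by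
    intro γ hγ
    have h' := LinearMap.congr_fun h (monomial γ 1)
    rw [Module.End.mul_apply, LinearMap.sub_apply, euler_monomial, LinearMap.smul_apply,
      Module.End.one_apply, ← sub_smul, map_smul, LinearMap.zero_apply] at h'
    exact (smul_eq_zero.1 h').resolve_left (sub_ne_zero.2 hγ)
  refine end_ext K n fun γ => ?_
  rw [LinearMap.zero_apply]
  by_cases hγ : ((∑ i, d i * γ i : ℕ) : K) = t
  · obtain ⟨k, hk⟩ := exists_adNilpotent K n 0 hu
    refine hk.apply_eq_zero K n 0 _ fun j => ?_
    rw [X_pow_eq_monomial, monomial_mul, one_mul]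
    refine hne _ fun hc => ?_
    rw [← hγ, Nat.cast_inj] at hc
    simp only [Finsupp.add_apply, mul_add, Finset.sum_add_distrib] at hc
    have hle := Finset.single_le_sum (f := fun i => d i * (Finsupp.single 0 (j + 1)) i)
      (fun i _ => Nat.zero_le _) (mem_univ 0)
    have hpos : 0 < d 0 * (j + 1) := Nat.mul_pos (hd 0) j.succ_pos
    simp only [Finsupp.single_eq_same] at hle
    omega
  · exact hne γ hγ

/-- Assume `n ≥ 2` and let `λ ∈ K`.  If `m ∈ D` satisfies
`x_i∘m ∈ D(E−λ)` for every `i`, then `m ∈ D(E−λ)`; here `D(E−λ)` is the principal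
left ideal `{w·(E − λ·1) : w ∈ D}`.  (Vanishing of `Hom_A(A/A_{≥1}, D/D(E−λ))`.) -/
theorem stmt7 (hn : 2 ≤ n) (hd : ∀ i, 0 < d i) (t : K) (m : Weyl K n)
    (h : ∀ i : Fin (n+1), ∃ w : Weyl K n,
        xElt K n i * m = w * (eulerElt K n d - t • 1)) :
    ∃ w : Weyl K n, m = w * (eulerElt K n d - t • 1) := by
  choose w hw using h
  have hw' : ∀ i, xOp K n i * m.1 = (w i).1 * (euler K n d - t • 1) := fun i =>
    congrArg Subtype.val (hw i)
  let k : Fin (n+1) := ⟨1, by omega⟩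
  have hk : k ≠ 0 := by simp [k, Fin.ext_iff]
  have hcomm : xOp K n 0 * xOp K n k = xOp K n k * xOp K n 0 :=
    LinearMap.ext fun f => mul_left_comm (X 0) (X k) f
  have hsub : xOp K n 0 * (w k).1 - xOp K n k * (w 0).1 = 0 := by
    refine eq_zero_of_mul_euler_sub_eq_zero K n d hd t ?_ ?_
    · exact (Weyl K n).sub_mem ((Weyl K n).mul_mem (xOp_mem K n 0) (w k).2)
        ((Weyl K n).mul_mem (xOp_mem K n k) (w 0).2)
    · rw [sub_mul, mul_assoc, mul_assoc, ← hw', ← hw', ← mul_assoc, ← mul_assoc, hcomm, sub_self]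
  have hdvd : ∀ f, (X 0 : Amb K n) ∣ (w 0).1 f := by
    intro f
    have hf : X 0 * (w k).1 f = X k * (w 0).1 f :=
      LinearMap.congr_fun (sub_eq_zero.1 hsub) f
    refine ((X_prime (i := 0)).dvd_or_dvd (Dvd.intro _ hf)).resolve_left fun hc => ?_
    exact hk (X_dvd_X.1 hc).symm
  obtain ⟨v, hv, hwv⟩ := exists_eq_mulLeft_mul K n (X 0) (w 0).2 hdvd
  refine ⟨⟨v, hv⟩, Subtype.ext (LinearMap.ext fun f => ?_)⟩
  have h₀ := hw' 0
  rw [hwv, mul_assoc] at h₀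
  exact mul_left_cancel₀ (X_ne_zero 0) (LinearMap.congr_fun h₀ f)

end
end

section
/- Let n = 1, so D is the Weyl algebra on x_0, x_1 with E = d_0 x_0∂_0 + d_1 x_1∂_1. Then x_0∘(d_0·∂_0) − x_1∘(−d_1·∂_1) = E, yet there is no m ∈ D such that both −d_1·∂_1 − x_0∘m ∈ D·E and d_0·∂_0 − x_1∘m ∈ D·E. (Hence the conclusion of the first-Koszul-cohomology vanishing fails for n = 1 and λ = 0.) -/
/-!
Context: `K` is a field of characteristic zero, `n ≥ 0`, and `d 0, …, d n` are
positive integers.  `A = K[x_0, …, x_n]` is the polynomial ring, graded with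
`x i` of weighted degree `d i`.  Inside `End_K(A)` we have the multiplication
operators `x i`, the partial derivatives `∂ i`, the Weyl algebra `D` generated
by them, and the Euler field `E = Σ_i d_i x_i ∂_i`.
-/

open MvPolynomial Finset

set_option linter.unusedSectionVars false
set_option synthInstance.maxHeartbeats 1000000
set_option maxHeartbeats 2000000

noncomputable section

variable (K : Type) [Field K] [CharZero K] (n : ℕ)

variable (d : Fin (n+1) → ℕ)

section AdNilpotent

variable (R : Type*) {B : Type*} [CommRing R] [Ring B] [Algebra R B]

/-- The inner derivation `p ↦ a * p - p * a`. -/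
def adMap (a : B) : Module.End R B := LinearMap.mulLeft R a - LinearMap.mulRight R a

lemma adMap_apply (a p : B) : adMap R a p = a * p - p * a := rfl

lemma adMap_mul (a p q : B) :
    adMap R a (p * q) = adMap R a p * q + p * adMap R a q := by
  simp only [adMap_apply]
  noncomm_ring

/-- If `adMap R a` is nilpotent on `p` and on `q`, then it is nilpotent on `p * q`. -/
lemma adMap_pow_mul_eq_zero (a : B) (k l : ℕ) : ∀ p q : B,
    (adMap R a ^ k) p = 0 → (adMap R a ^ l) q = 0 →
      (adMap R a ^ (k + l)) (p * q) = 0 := by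
  induction k generalizing l with
  | zero =>
    intro p q hp _
    obtain rfl : p = 0 := by simpa using hp
    simp
  | succ k ihk =>
    induction l with
    | zero =>
      intro p q _ hq
      obtain rfl : q = 0 := by simpa using hq
      simp
    | succ l ihl =>
      intro p q hp hq
      have hleft := ihk (l + 1) (adMap R a p) q
        (by rwa [pow_succ, Module.End.mul_apply] at hp) hq
      have hright := ihl p (adMap R a q) hp
        (by rwa [pow_succ, Module.End.mul_apply] at hq)
      rw [← add_assoc, pow_succ, Module.End.mul_apply, adMap_mul, map_add, hright, add_zero,
        add_right_comm, add_assoc, hleft]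

/-- The elements on which `adMap R a` is nilpotent. -/
def adNilpotent (a : B) : Subalgebra R B where
  carrier := {p | ∃ k, (adMap R a ^ k) p = 0}
  mul_mem' := by
    rintro p q ⟨k, hk⟩ ⟨l, hl⟩
    exact ⟨k + l, adMap_pow_mul_eq_zero R a k l p q hk hl⟩
  add_mem' := by
    rintro p q ⟨k, hk⟩ ⟨l, hl⟩
    refine ⟨k + l, ?_⟩
    rw [map_add, Module.End.pow_map_zero_of_le (Nat.le_add_right k l) hk,
      Module.End.pow_map_zero_of_le (Nat.le_add_left l k) hl, add_zero]
  algebraMap_mem' r := ⟨1, by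
    rw [pow_one, adMap_apply, Algebra.commutes, sub_self]⟩

end AdNilpotent

/-- The adjoint action of a coordinate is locally nilpotent on the Weyl algebra. -/
lemma Weyl_le_adNilpotent (j : Fin (n + 1)) : Weyl K n ≤ adNilpotent K (xOp K n j) := by
  refine Algebra.adjoin_le ?_
  rintro _ (⟨i, rfl⟩ | ⟨i, rfl⟩)
  · refine ⟨1, LinearMap.ext fun f => ?_⟩
    simp [adMap_apply, xOp, mul_left_comm]
  · refine ⟨2, ?_⟩
    have hbracket : adMap K (xOp K n j) (dOp K n i) = algebraMap K _ (-(if i = j then 1 else 0)) := by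
      refine LinearMap.ext fun f => ?_
      by_cases h : i = j
      · subst h
        simp [adMap_apply, xOp, dOp, Derivation.leibniz]
      · simp [adMap_apply, xOp, dOp, Derivation.leibniz, pderiv_X_of_ne (Ne.symm h), h]
    rw [pow_two, Module.End.mul_apply, hbracket,
      adMap_apply, Algebra.commutes, sub_self]

/-- Restriction of polynomials to the line `x_0 = 0`, with `x_1` as the coordinate. -/
def lineRestriction : Amb K 1 →ₐ[K] Polynomial K := aeval ![0, Polynomial.X]

/-- The iterated brackets with `x_1` of an operator sending `x_1 ^ (b + 1)` to `-x_1 ^ b` modulo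
`x_0`: they kill the positive powers of `x_1` modulo `x_0`, and their value at `1` is explicit. -/
lemma lineRestriction_adMap_pow (w : Module.End K (Amb K 1))
    (hw : ∀ b : ℕ, lineRestriction K (w (X 1 ^ (b + 1))) = -Polynomial.X ^ b) (k : ℕ) :
    lineRestriction K ((adMap K (xOp K 1 1) ^ (k + 1)) w 1) =
        Polynomial.X ^ k * (Polynomial.X * lineRestriction K (w 1) + 1) ∧
      ∀ b : ℕ, lineRestriction K
        ((adMap K (xOp K 1 1) ^ (k + 1)) w (X 1 ^ (b + 1))) = 0 := by
  have hX : lineRestriction K (X 1) = Polynomial.X := by simp [lineRestriction]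
  have hbracket (u : Module.End K (Amb K 1)) (b : ℕ) :
      lineRestriction K (adMap K (xOp K 1 1) u (X 1 ^ b)) =
        Polynomial.X * lineRestriction K (u (X 1 ^ b)) -
          lineRestriction K (u (X 1 ^ (b + 1))) := by
    simp [adMap_apply, xOp, hX, pow_succ']
  induction k with
  | zero =>
    rw [zero_add, pow_one]
    refine ⟨?_, fun b => ?_⟩
    · have h := hbracket w 0
      rw [hw 0] at h
      simpa using h
    · rw [hbracket, hw, hw, pow_succ']
      ring
  | succ k ih =>
    rw [pow_succ', Module.End.mul_apply]
    refine ⟨?_, fun b => ?_⟩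
    · have h := hbracket ((adMap K (xOp K 1 1) ^ (k + 1)) w) 0
      rw [ih.2 0, pow_zero, ih.1] at h
      rw [h]
      ring
    · rw [hbracket, ih.2, ih.2, mul_zero, sub_zero]

/-- Let `n = 1`, so `D` is the Weyl algebra on `x_0, x_1` with
`E = d_0 x_0∂_0 + d_1 x_1∂_1`.  Then `x_0∘(d_0·∂_0) − x_1∘(−d_1·∂_1) = E`, yet there is
no `m ∈ D` with both `−d_1·∂_1 − x_0∘m ∈ D·E` and `d_0·∂_0 − x_1∘m ∈ D·E`.
(The first-Koszul-cohomology vanishing fails for `n = 1`, `λ = 0`.) -/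
theorem stmt10 (d : Fin 2 → ℕ) (hd : ∀ i, 0 < d i) :
    xElt K 1 0 * ((d 0 : K) • dElt K 1 0) - xElt K 1 1 * ((-(d 1 : K)) • dElt K 1 1) =
      eulerElt K 1 d ∧
    ¬ ∃ m : Weyl K 1,
        (∃ w : Weyl K 1,
          (-(d 1 : K)) • dElt K 1 1 - xElt K 1 0 * m = w * eulerElt K 1 d) ∧
        (∃ w : Weyl K 1,
          (d 0 : K) • dElt K 1 0 - xElt K 1 1 * m = w * eulerElt K 1 d) := by
  constructor
  · refine Subtype.ext (LinearMap.ext fun f => ?_)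
    simp [xElt, dElt, eulerElt, euler, Fin.sum_univ_two, xOp]
  · rintro ⟨m, ⟨w, hmw⟩, -⟩
    have hd1 : (d 1 : K) ≠ 0 := Nat.cast_ne_zero.mpr (hd 1).ne'
    have hop : (-(d 1 : K)) • dOp K 1 1 - xOp K 1 0 * m.1 = w.1 * euler K 1 d :=
      congrArg Subtype.val hmw
    have hw (b : ℕ) : lineRestriction K (w.1 (X 1 ^ (b + 1))) = -Polynomial.X ^ b := by
      have heuler : euler K 1 d (X 1 ^ (b + 1)) =
          ((d 1 : K) * ((b + 1 : ℕ) : K)) • (X 1 : Amb K 1) ^ (b + 1) := by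
        simp [euler, Fin.sum_univ_two, xOp, dOp, Derivation.leibniz_pow,
          MvPolynomial.smul_eq_C_mul]
        ring
      have hb : (d 1 : K) * ((b + 1 : ℕ) : K) ≠ 0 :=
        mul_ne_zero hd1 (Nat.cast_ne_zero.mpr b.succ_ne_zero)
      have h := congrArg (lineRestriction K) (LinearMap.congr_fun hop (X 1 ^ (b + 1)))
      rw [Module.End.mul_apply, heuler, map_smul, map_smul] at h
      refine smul_right_injective _ hb ?_
      change _ • _ = _ • _
      rw [← h]
      simp [lineRestriction, xOp, dOp, Derivation.leibniz_pow, Polynomial.smul_eq_C_mul]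
      ring
    obtain ⟨k, hk⟩ := Weyl_le_adNilpotent K 1 1 w.2
    have h := (lineRestriction_adMap_pow K w.1 hw k).1
    rw [Module.End.pow_map_zero_of_le k.le_succ hk, LinearMap.zero_apply, map_zero] at h
    have hzero := (mul_eq_zero.mp h.symm).resolve_left (pow_ne_zero k Polynomial.X_ne_zero)
    simpa using congrArg (Polynomial.eval 0) hzero

end
end

section
/- Assume n ≥ 1 and let λ ∈ K. Let M be a torsion-free λ-Euler graded D-module with M_0 = 0, and let m = lcm(d_0,…,d_n). Then M_{−mt} = 0 for every integer t > 0. -/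
/-!
Context: `K` is a field of characteristic zero, `n ≥ 0`, and `d 0, …, d n` are
positive integers.  `A = K[x_0, …, x_n]` is the polynomial ring, graded with
`x i` of weighted degree `d i`.  Inside `End_K(A)` we have the multiplication
operators `x i`, the partial derivatives `∂ i`, the Weyl algebra `D` generated
by them, and the Euler field `E = Σ_i d_i x_i ∂_i`.
-/

open MvPolynomial Finset

set_option linter.unusedSectionVars false
set_option synthInstance.maxHeartbeats 1000000
set_option maxHeartbeats 2000000

noncomputable section

variable (K : Type) [Field K] [CharZero K] (n : ℕ)

variable (d : Fin (n+1) → ℕ)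

/-- If an operator raises degrees by `e`, its `j`-th power raises degrees by `j * e`. -/
lemma pow_apply_mem_of_shift {M : Type} [AddCommGroup M] [Module K M]
    (Mgr : ℤ → Submodule K M) (f : Module.End K M) (e : ℤ)
    (hf : ∀ k, ∀ m ∈ Mgr k, f m ∈ Mgr (k + e)) (j : ℕ) {k : ℤ} {m : M} (hm : m ∈ Mgr k) :
    (f ^ j) m ∈ Mgr (k + j * e) := by
  induction j with
  | zero => simpa using hm
  | succ j ih =>
    rw [pow_succ', Module.End.mul_apply]
    convert hf _ _ ih using 2
    push_cast
    ring

/-- Assume `n ≥ 1` and let `λ ∈ K`.  Let `M` be a torsion-free `λ`-Euler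
graded `D`-module with `M_0 = 0` (the `D`-module structure is a representation
`ρ : D →ₐ[K] End_K(M)`, the grading `Mgr : ℤ → Submodule K M` is an internal direct sum
with `x_i·M_k ⊆ M_{k+d_i}`, `∂_i·M_k ⊆ M_{k−d_i}` and `E·m = (λ+k)·m` on `M_k`), and let
`m = lcm(d_0,…,d_n)`.  Then `M_{−ms} = 0` for every integer `s > 0`. -/
theorem stmt12 (hn : 1 ≤ n) (hd : ∀ i, 0 < d i) (t : K)
    {M : Type} [AddCommGroup M] [Module K M]
    (ρ : Weyl K n →ₐ[K] Module.End K M)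
    (Mgr : ℤ → Submodule K M)
    (hdirect : DirectSum.IsInternal Mgr)
    (hgx : ∀ (i : Fin (n+1)) (k : ℤ), ∀ m ∈ Mgr k, ρ (xElt K n i) m ∈ Mgr (k + d i))
    (hgd : ∀ (i : Fin (n+1)) (k : ℤ), ∀ m ∈ Mgr k, ρ (dElt K n i) m ∈ Mgr (k - d i))
    (hgE : ∀ (k : ℤ), ∀ m ∈ Mgr k, ρ (eulerElt K n d) m = (t + (k : K)) • m)
    (htf : ∀ m : M, (∃ c : ℕ, ∀ i : Fin (n+1), (ρ (xElt K n i) ^ c) m = 0) → m = 0)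
    (h0 : Mgr 0 = ⊥) :
    ∀ s : ℤ, 0 < s → Mgr (-(((Finset.univ.lcm d : ℕ) : ℤ) * s)) = ⊥ := by
  intro s hs
  lift s to ℕ using hs.le
  rw [Submodule.eq_bot_iff]
  intro v hv
  refine htf v ⟨Finset.univ.lcm d * s, fun i => ?_⟩
  obtain ⟨q, hq⟩ : d i ∣ Finset.univ.lcm d := Finset.dvd_lcm (Finset.mem_univ i)
  have hle : q * s ≤ Finset.univ.lcm d * s :=
    Nat.mul_le_mul_right _ (hq ▸ Nat.le_mul_of_pos_left q (hd i))
  have hmem := pow_apply_mem_of_shift K Mgr _ (d i) (hgx i) (q * s) hv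
  have hdeg : -(((Finset.univ.lcm d : ℕ) : ℤ) * s) + ((q * s : ℕ) : ℤ) * d i = 0 := by
    rw [hq]
    push_cast
    ring
  rw [hdeg, h0, Submodule.mem_bot] at hmem
  rw [← Nat.sub_add_cancel hle, pow_add, Module.End.mul_apply, hmem, map_zero]

end
end

section
/- Assume n ≥ 1 and let λ ∈ K. Let M be a torsion-free λ-Euler graded D-module with M_0 = 0, and let m = lcm(d_0,…,d_n). Then M_{−mt + k d_i} = 0 for every i ∈ {0,…,n}, every integer t > 0, and every integer k with 0 ≤ k ≤ mt/d_i. In particular, M_{−k d_i} = 0 for every i and every integer k ≥ 0. -/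
/-!
Context: `K` is a field of characteristic zero, `n ≥ 0`, and `d 0, …, d n` are
positive integers.  `A = K[x_0, …, x_n]` is the polynomial ring, graded with
`x i` of weighted degree `d i`.  Inside `End_K(A)` we have the multiplication
operators `x i`, the partial derivatives `∂ i`, the Weyl algebra `D` generated
by them, and the Euler field `E = Σ_i d_i x_i ∂_i`.
-/

open MvPolynomial Finset

set_option linter.unusedSectionVars false
set_option synthInstance.maxHeartbeats 1000000
set_option maxHeartbeats 2000000

noncomputable section

variable (K : Type) [Field K] [CharZero K] (n : ℕ)

variable (d : Fin (n+1) → ℕ)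

lemma dOp_mul_xOp (i : Fin (n+1)) :
    dOp K n i * xOp K n i = xOp K n i * dOp K n i + 1 := by
  refine LinearMap.ext fun p => ?_
  simp only [dOp, xOp, Module.End.mul_apply, LinearMap.add_apply, Module.End.one_apply,
    LinearMap.mulLeft_apply, Derivation.coeFn_coe,
    Derivation.leibniz, pderiv_X_self, smul_eq_mul, mul_one]

lemma dElt_mul_xElt (i : Fin (n+1)) :
    dElt K n i * xElt K n i = xElt K n i * dElt K n i + 1 :=
  Subtype.ext (dOp_mul_xOp K n i)

section HeisenbergPair

variable {F V : Type*} [Field F] [AddCommGroup V] [Module F V] {x y : Module.End F V}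

lemma pow_succ_mul_of_mul_eq_mul_add_one (h : y * x = x * y + 1) (j : ℕ) :
    y ^ (j + 1) * x = x * y ^ (j + 1) + (j + 1) • y ^ j := by
  induction j with
  | zero => simpa using h
  | succ j ih =>
    rw [pow_succ' y (j + 1), mul_assoc, ih, mul_add, ← mul_assoc, h, add_mul, mul_assoc,
      one_mul, mul_smul_comm, ← pow_succ', ← pow_succ', add_assoc, ← succ_nsmul']

lemma eq_zero_of_apply_eq_zero_of_pow_apply_eq_zero [CharZero F] (h : y * x = x * y + 1)
    {v : V} (hx : x v = 0) (j : ℕ) (hy : (y ^ j) v = 0) : v = 0 := by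
  induction j with
  | zero => simpa using hy
  | succ j ih =>
    have key := LinearMap.congr_fun (pow_succ_mul_of_mul_eq_mul_add_one h j) v
    simp only [Module.End.mul_apply, LinearMap.add_apply, LinearMap.smul_apply, hx, hy,
      map_zero, zero_add] at key
    refine ih ?_
    rw [← Nat.cast_smul_eq_nsmul F] at key
    exact (smul_eq_zero.mp key.symm).resolve_left (Nat.cast_ne_zero.mpr j.succ_ne_zero)

/-- In characteristic zero, a vector killed by powers of both members of a pair of operators
satisfying the Heisenberg relation vanishes. -/
lemma eq_zero_of_pow_apply_eq_zero [CharZero F] (h : y * x = x * y + 1)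
    (a j : ℕ) {v : V} (hx : (x ^ a) v = 0) (hy : (y ^ j) v = 0) : v = 0 := by
  induction a generalizing v j with
  | zero => simpa using hx
  | succ a ih =>
    have hxv : x v = 0 := by
      refine ih (j + 1) (by simpa [pow_succ] using hx) ?_
      have key := LinearMap.congr_fun (pow_succ_mul_of_mul_eq_mul_add_one h j) v
      simpa [pow_succ' y j, hy] using key
    exact eq_zero_of_apply_eq_zero_of_pow_apply_eq_zero h hxv j hy

end HeisenbergPair

lemma pow_apply_mem_of_forall_apply_mem {F V : Type*} [Field F] [AddCommGroup V] [Module F V]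
    {f : Module.End F V} {G : ℤ → Submodule F V} {e : ℤ}
    (hf : ∀ k : ℤ, ∀ v ∈ G k, f v ∈ G (k + e)) (c : ℕ) {k : ℤ} {v : V} (hv : v ∈ G k) :
    (f ^ c) v ∈ G (k + c * e) := by
  induction c with
  | zero => simpa using hv
  | succ c ih =>
    rw [pow_succ', Module.End.mul_apply]
    convert hf _ _ ih using 2
    push_cast
    ring

/-- Assume `n ≥ 1` and let `λ ∈ K`.  Let `M` be a torsion-free `λ`-Euler
graded `D`-module with `M_0 = 0`, and let `m = lcm(d_0,…,d_n)`.  Then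
`M_{−ms + k d_i} = 0` for every `i`, every integer `s > 0` and every integer `k` with
`0 ≤ k ≤ ms/d_i` (i.e. `k·d_i ≤ ms`).  In particular `M_{−k d_i} = 0` for every `i` and
every integer `k ≥ 0`. -/
theorem stmt13 (hn : 1 ≤ n) (hd : ∀ i, 0 < d i) (t : K)
    {M : Type} [AddCommGroup M] [Module K M]
    (ρ : Weyl K n →ₐ[K] Module.End K M)
    (Mgr : ℤ → Submodule K M)
    (hdirect : DirectSum.IsInternal Mgr)
    (hgx : ∀ (i : Fin (n+1)) (k : ℤ), ∀ m ∈ Mgr k, ρ (xElt K n i) m ∈ Mgr (k + d i))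
    (hgd : ∀ (i : Fin (n+1)) (k : ℤ), ∀ m ∈ Mgr k, ρ (dElt K n i) m ∈ Mgr (k - d i))
    (hgE : ∀ (k : ℤ), ∀ m ∈ Mgr k, ρ (eulerElt K n d) m = (t + (k : K)) • m)
    (htf : ∀ m : M, (∃ c : ℕ, ∀ i : Fin (n+1), (ρ (xElt K n i) ^ c) m = 0) → m = 0)
    (h0 : Mgr 0 = ⊥) :
    (∀ (i : Fin (n+1)) (s : ℤ), 0 < s → ∀ k : ℤ, 0 ≤ k →
        k * d i ≤ ((Finset.univ.lcm d : ℕ) : ℤ) * s →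
        Mgr (-(((Finset.univ.lcm d : ℕ) : ℤ) * s) + k * d i) = ⊥) ∧
    (∀ (i : Fin (n+1)) (k : ℤ), 0 ≤ k → Mgr (-(k * d i)) = ⊥) := by
  have hxmem (i : Fin (n+1)) (c : ℕ) {k : ℤ} {v : M} (hv : v ∈ Mgr k) :
      (ρ (xElt K n i) ^ c) v ∈ Mgr (k + c * d i) :=
    pow_apply_mem_of_forall_apply_mem (hgx i) c hv
  have hdmem (i : Fin (n+1)) (c : ℕ) {k : ℤ} {v : M} (hv : v ∈ Mgr k) :
      (ρ (dElt K n i) ^ c) v ∈ Mgr (k + c * -(d i : ℤ)) :=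
    pow_apply_mem_of_forall_apply_mem (hgd i) c hv
  have hcomm (i : Fin (n+1)) : ρ (dElt K n i) * ρ (xElt K n i)
      = ρ (xElt K n i) * ρ (dElt K n i) + 1 := by
    rw [← map_mul, dElt_mul_xElt, map_add, map_mul, map_one]
  have hdvd (i : Fin (n+1)) : d i ∣ Finset.univ.lcm d := Finset.dvd_lcm (Finset.mem_univ i)
  have hpos : 0 < Finset.univ.lcm d :=
    Nat.pos_of_ne_zero fun h => by
      obtain ⟨i, -, hi⟩ := Finset.lcm_eq_zero_iff.mp h
      exact (hd i).ne' hi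
  generalize Finset.univ.lcm d = l at hdvd hpos ⊢
  have hlcm (s : ℕ) : Mgr (-((l : ℤ) * s)) = ⊥ := by
    refine (Submodule.eq_bot_iff _).mpr fun v hv => htf v ⟨l * s, fun i => ?_⟩
    obtain ⟨q, hq⟩ := hdvd i
    have hmem := hxmem i (q * s) hv
    rw [show -((l : ℤ) * s) + (q * s : ℕ) * d i = 0 by rw [hq]; push_cast; ring, h0,
      Submodule.mem_bot] at hmem
    have hle : q * s ≤ l * s :=
      Nat.mul_le_mul_right s (hq ▸ Nat.le_mul_of_pos_left q (hd i))
    rw [← Nat.sub_add_cancel hle, pow_add, Module.End.mul_apply, hmem, map_zero]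
  have hmain : ∀ (i : Fin (n+1)) (s : ℤ), 0 < s → ∀ k : ℤ, 0 ≤ k →
      k * d i ≤ (l : ℤ) * s → Mgr (-((l : ℤ) * s) + k * d i) = ⊥ := by
    intro i s hs k hk hks
    lift s to ℕ using hs.le
    lift k to ℕ using hk
    obtain ⟨q, hq⟩ := hdvd i
    have hkq : k ≤ q * s := by
      refine Nat.le_of_mul_le_mul_left ?_ (hd i)
      rw [← mul_assoc, ← hq, mul_comm (d i)]
      exact_mod_cast hks
    refine (Submodule.eq_bot_iff _).mpr fun v hv =>
      eq_zero_of_pow_apply_eq_zero (hcomm i) (q * s - k) k ?_ ?_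
    · have hmem := hxmem i (q * s - k) hv
      rwa [show -((l : ℤ) * s) + k * d i + (q * s - k : ℕ) * d i = 0 by
        rw [hq, Nat.cast_sub hkq]; push_cast; ring, h0, Submodule.mem_bot] at hmem
    · have hmem := hdmem i k hv
      rwa [show -((l : ℤ) * s) + k * d i + k * -(d i : ℤ) = -((l : ℤ) * s) by ring, hlcm,
        Submodule.mem_bot] at hmem
  refine ⟨hmain, fun i k hk => ?_⟩
  obtain ⟨q, hq⟩ := hdvd i
  have hq1 : (1 : ℤ) ≤ q := by
    exact_mod_cast Nat.pos_of_ne_zero fun h => hpos.ne' (by rw [hq, h, mul_zero])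
  have hl : (l : ℤ) = d i * q := by exact_mod_cast hq
  have hle : k ≤ q * (k + 1) := by nlinarith
  have hdi : (0 : ℤ) ≤ d i := Int.natCast_nonneg _
  have hbot := hmain i (k + 1) (by lia) (q * (k + 1) - k) (by lia) (by rw [hl]; nlinarith)
  rwa [hl, show -((d i : ℤ) * q * (k + 1)) + (q * (k + 1) - k) * d i = -(k * d i) by ring]
    at hbot

end
end
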